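/- Let R > 0, C₀ > 0, C₁ > 0, a > 0 and N > 0. Let g : [R, ∞) → ℝ be a nonnegative twice continuously differentiable function such that g(t) = O(t^N) as t → ∞ and −g″(t) ≤ −C₀·g(t) + C₁·e^{−a·t} for all t ≥ R. Then there exist ε > 0 and C > 0 such that g(t) ≤ C·e^{−ε·t} for all t ≥ R. -/

import Mathlib

/-!
The function `u = g - C e^{-εt}` satisfies `u'' ≥ C₀ u` once `ε² < C₀`, `ε ≤ a` and `C` is large
enough, and `u(R) ≤ 0` for `C` large. Such a function cannot have a positive interior maximum, and
subtracting the barrier `δ e^{√C₀ t}`, a solution of `v'' = C₀ v` which dominates `g` near infinity,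
excludes positive values escaping to infinity. Letting `δ → 0` gives `u ≤ 0`.
-/

open Set Filter Topology

theorem deriv_deriv_nonpos_of_isLocalMax {u : ℝ → ℝ} {x : ℝ} (hmax : IsLocalMax u x)
    (hcont : ContinuousAt u x) : deriv (deriv u) x ≤ 0 := by
  by_contra! hpos
  have hmin : IsLocalMin u x := isLocalMin_of_deriv_deriv_pos hpos hmax.deriv_eq_zero hcont
  have hconst : u =ᶠ[𝓝 x] fun _ => u x := by
    filter_upwards [hmax, hmin] with y hle hge using le_antisymm hle hge
  have hzero : deriv (deriv u) x = 0 := by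
    rw [hconst.deriv.deriv_eq]
    simp
  exact hpos.ne' hzero

theorem nonpos_on_Icc_of_second_deriv_pos_of_pos {u u' u'' : ℝ → ℝ} {p q : ℝ}
    (hcont : ContinuousOn u (Icc p q))
    (hu' : ∀ t ∈ Ioo p q, HasDerivAt u (u' t) t)
    (hu'' : ∀ t ∈ Ioo p q, HasDerivAt u' (u'' t) t)
    (hp : u p ≤ 0) (hq : u q ≤ 0) (hpos : ∀ t ∈ Ioo p q, 0 < u t → 0 < u'' t) :
    ∀ t ∈ Icc p q, u t ≤ 0 := by
  intro t ht
  by_contra! hut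
  obtain ⟨x, hx, hmax⟩ := isCompact_Icc.exists_isMaxOn ⟨t, ht⟩ hcont
  have hux : 0 < u x := hut.trans_le (hmax ht)
  have hpx : p < x := hx.1.lt_of_ne (by rintro rfl; exact hp.not_gt hux)
  have hxq : x < q := hx.2.lt_of_ne (by rintro rfl; exact hq.not_gt hux)
  have hderiv : deriv u =ᶠ[𝓝 x] u' := by
    filter_upwards [Ioo_mem_nhds hpx hxq] with y hy using (hu' y hy).deriv
  have hnonpos : u'' x ≤ 0 := by
    rw [← (hu'' x ⟨hpx, hxq⟩).deriv, ← hderiv.deriv_eq]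
    exact deriv_deriv_nonpos_of_isLocalMax (hmax.isLocalMax (Icc_mem_nhds hpx hxq))
      (hu' x ⟨hpx, hxq⟩).continuousAt
  exact hnonpos.not_gt (hpos x ⟨hpx, hxq⟩ hux)

theorem hasDerivAt_const_mul_exp_mul (A k t : ℝ) :
    HasDerivAt (fun s => A * Real.exp (k * s)) (A * k * Real.exp (k * t)) t := by
  refine (((hasDerivAt_id t).const_mul k).exp.const_mul A).congr_deriv ?_
  simp only [id]
  ring

theorem hasDerivAt_iteratedDerivWithin {𝕜 F : Type*} [NontriviallyNormedField 𝕜]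
    [NormedAddCommGroup F] [NormedSpace 𝕜 F] {f : 𝕜 → F} {s : Set 𝕜} {x : 𝕜} {m : WithTop ℕ∞}
    {n : ℕ} (hf : ContDiffOn 𝕜 m f s) (hnm : n < m) (hs : UniqueDiffOn 𝕜 s) (hx : s ∈ 𝓝 x) :
    HasDerivAt (iteratedDerivWithin n f s) (iteratedDerivWithin (n + 1) f s x) x := by
  rw [iteratedDerivWithin_succ]
  exact (hf.differentiableOn_iteratedDerivWithin hnm hs x
    (mem_of_mem_nhds hx)).hasDerivWithinAt.hasDerivAt hx

theorem eventually_le_mul_exp_of_eventually_le_rpow {u : ℝ → ℝ} {A N k δ : ℝ}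
    (hu : ∀ᶠ t in atTop, u t ≤ A * t ^ N) (hk : 0 < k) (hδ : 0 < δ) :
    ∀ᶠ t in atTop, u t ≤ δ * Real.exp (k * t) := by
  filter_upwards [hu, ((isLittleO_rpow_exp_pos_mul_atTop N hk).const_mul_left A).bound hδ]
    with t hut hpow
  rw [Real.norm_of_nonneg (Real.exp_pos _).le] at hpow
  exact hut.trans ((Real.le_norm_self _).trans hpow)

section HalfLine

variable {u u' u'' : ℝ → ℝ} {R : ℝ}

theorem le_mul_exp_of_sq_mul_le_second_deriv {A k : ℝ} (hk : k ≠ 0)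
    (hcont : ContinuousOn u (Ici R))
    (hu' : ∀ t ∈ Ioi R, HasDerivAt u (u' t) t)
    (hu'' : ∀ t ∈ Ioi R, HasDerivAt u' (u'' t) t)
    (hR : u R ≤ A * Real.exp (k * R))
    (hineq : ∀ t ∈ Ioi R, k ^ 2 * u t ≤ u'' t)
    (hgrow : ∀ᶠ t in atTop, u t ≤ A * Real.exp (k * t)) :
    ∀ t ∈ Ici R, u t ≤ A * Real.exp (k * t) := by
  intro t ht
  obtain ⟨S, hS, htS⟩ := (hgrow.and (eventually_ge_atTop t)).exists
  have hcont_sub : ContinuousOn (fun s => u s - A * Real.exp (k * s)) (Icc R S) :=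
    (hcont.mono Icc_subset_Ici_self).sub (by fun_prop)
  refine sub_nonpos.1 (nonpos_on_Icc_of_second_deriv_pos_of_pos hcont_sub
    (fun s hs => (hu' s hs.1).sub (hasDerivAt_const_mul_exp_mul A k s))
    (fun s hs => (hu'' s hs.1).sub (hasDerivAt_const_mul_exp_mul (A * k) k s))
    (sub_nonpos.2 hR) (sub_nonpos.2 hS) ?_ t ⟨ht, htS⟩)
  intro s hs hpos
  calc 0 < k ^ 2 * (u s - A * Real.exp (k * s)) := by positivity
    _ = k ^ 2 * u s - A * k * k * Real.exp (k * s) := by ring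
    _ ≤ u'' s - A * k * k * Real.exp (k * s) := by gcongr; exact hineq s hs.1

theorem nonpos_of_sq_mul_le_second_deriv {k : ℝ} (hk : k ≠ 0)
    (hcont : ContinuousOn u (Ici R))
    (hu' : ∀ t ∈ Ioi R, HasDerivAt u (u' t) t)
    (hu'' : ∀ t ∈ Ioi R, HasDerivAt u' (u'' t) t)
    (hR : u R ≤ 0) (hineq : ∀ t ∈ Ioi R, k ^ 2 * u t ≤ u'' t)
    (hgrow : ∀ δ > 0, ∀ᶠ t in atTop, u t ≤ δ * Real.exp (k * t)) :
    ∀ t ∈ Ici R, u t ≤ 0 := by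
  intro t ht
  refine le_of_forall_pos_le_add fun η hη => ?_
  have hδ : 0 < η / Real.exp (k * t) := by positivity
  have hle := le_mul_exp_of_sq_mul_le_second_deriv hk hcont hu' hu'' (hR.trans (by positivity))
    hineq (hgrow _ hδ) t ht
  rwa [div_mul_cancel₀ _ (Real.exp_pos _).ne', ← zero_add η] at hle

end HalfLine

theorem exists_exp_supersolution (R C1 b : ℝ) {C0 a ε : ℝ} (hεa : ε ≤ a)
    (hεC0 : ε ^ 2 < C0) :
    ∃ C > 0, b ≤ C * Real.exp (-ε * R) ∧
      ∀ t ∈ Ici R, C1 * Real.exp (-a * t) ≤ (C0 - ε ^ 2) * (C * Real.exp (-ε * t)) := by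
  have hgap : 0 < C0 - ε ^ 2 := sub_pos.2 hεC0
  obtain ⟨C, hC, hCb, hCsource⟩ : ∃ C > 0, b / Real.exp (-ε * R) ≤ C ∧
      |C1| * Real.exp ((ε - a) * R) / (C0 - ε ^ 2) ≤ C :=
    ((eventually_gt_atTop 0).and
      ((eventually_ge_atTop _).and (eventually_ge_atTop _))).exists
  refine ⟨C, hC, (div_le_iff₀ (Real.exp_pos _)).1 hCb, fun t ht => ?_⟩
  have hdecay : (ε - a) * t ≤ (ε - a) * R :=
    mul_le_mul_of_nonpos_left ht (sub_nonpos.2 hεa)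
  calc C1 * Real.exp (-a * t)
      ≤ |C1| * Real.exp (-a * t) := by gcongr; exact le_abs_self C1
    _ = |C1| * Real.exp ((ε - a) * t) * Real.exp (-ε * t) := by
        rw [mul_assoc, ← Real.exp_add]
        ring_nf
    _ ≤ |C1| * Real.exp ((ε - a) * R) * Real.exp (-ε * t) := by gcongr
    _ ≤ C * (C0 - ε ^ 2) * Real.exp (-ε * t) :=
        mul_le_mul_of_nonneg_right ((div_le_iff₀ hgap).1 hCsource) (Real.exp_pos _).le
    _ = (C0 - ε ^ 2) * (C * Real.exp (-ε * t)) := by ring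

section Decay

variable {g g' g'' : ℝ → ℝ} {R C0 C1 a : ℝ}

theorem exists_le_mul_exp_neg_of_differential_inequality {ε : ℝ} (hεa : ε ≤ a) (hεC0 : ε ^ 2 < C0)
    (hcont : ContinuousOn g (Ici R))
    (hg' : ∀ t ∈ Ioi R, HasDerivAt g (g' t) t)
    (hg'' : ∀ t ∈ Ioi R, HasDerivAt g' (g'' t) t)
    (hgrow : ∀ δ > 0, ∀ᶠ t in atTop, g t ≤ δ * Real.exp (√C0 * t))
    (hineq : ∀ t ∈ Ioi R, -g'' t ≤ -C0 * g t + C1 * Real.exp (-a * t)) :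
    ∃ C > 0, ∀ t ∈ Ici R, g t ≤ C * Real.exp (-ε * t) := by
  have hC0 : 0 < C0 := (sq_nonneg ε).trans_lt hεC0
  obtain ⟨C, hC, hCR, hsuper⟩ := exists_exp_supersolution R C1 (g R) hεa hεC0
  refine ⟨C, hC, fun t ht => sub_nonpos.1 (nonpos_of_sq_mul_le_second_deriv
    (Real.sqrt_pos.2 hC0).ne' (hcont.sub (by fun_prop))
    (fun s hs => (hg' s hs).sub (hasDerivAt_const_mul_exp_mul C (-ε) s))
    (fun s hs => (hg'' s hs).sub (hasDerivAt_const_mul_exp_mul (C * -ε) (-ε) s))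
    (sub_nonpos.2 hCR) (fun s hs => ?_) (fun δ hδ => ?_) t ht)⟩
  · rw [Real.sq_sqrt hC0.le]
    calc C0 * (g s - C * Real.exp (-ε * s))
        ≤ g'' s + C1 * Real.exp (-a * s) - C0 * (C * Real.exp (-ε * s)) := by
          linarith [hineq s hs]
      _ ≤ g'' s - C * -ε * -ε * Real.exp (-ε * s) := by
          linarith [hsuper s (Ioi_subset_Ici_self hs)]
  · filter_upwards [hgrow δ hδ] with s hs
    exact (sub_le_self _ (by positivity)).trans hs

theorem exp_decay_of_differential_inequality_general (hC0 : 0 < C0) (ha : 0 < a)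
    (hcont : ContinuousOn g (Ici R))
    (hg' : ∀ t ∈ Ioi R, HasDerivAt g (g' t) t)
    (hg'' : ∀ t ∈ Ioi R, HasDerivAt g' (g'' t) t)
    (hgrow : ∀ δ > 0, ∀ᶠ t in atTop, g t ≤ δ * Real.exp (√C0 * t))
    (hineq : ∀ t ∈ Ioi R, -g'' t ≤ -C0 * g t + C1 * Real.exp (-a * t)) :
    ∃ ε > 0, ∃ C > 0, ∀ t ∈ Ici R, g t ≤ C * Real.exp (-ε * t) := by
  obtain ⟨ε, hε, hεmin⟩ := exists_between (lt_min ha (Real.sqrt_pos.2 hC0))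
  obtain ⟨hεa, hεC0⟩ := lt_min_iff.1 hεmin
  exact ⟨ε, hε, exists_le_mul_exp_neg_of_differential_inequality hεa.le
    ((Real.lt_sqrt hε.le).1 hεC0) hcont hg' hg'' hgrow hineq⟩

end Decay

/-- Ahlfors-type lemma: a nonnegative `C²` function on `[R, ∞)` of polynomial
growth satisfying `−g″ ≤ −C₀·g + C₁·e^{−a·t}` decays exponentially. -/
theorem exp_decay_of_differential_inequality
    (R C0 C1 a N : ℝ) (hR : 0 < R) (hC0 : 0 < C0) (hC1 : 0 < C1)
    (ha : 0 < a) (hN : 0 < N) (g : ℝ → ℝ)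
    (hg0 : ∀ t ∈ Set.Ici R, 0 ≤ g t)
    (hg2 : ContDiffOn ℝ 2 g (Set.Ici R))
    (hgrow : ∃ C' > 0, ∃ T ≥ R, ∀ t ≥ T, g t ≤ C' * t ^ N)
    (hineq : ∀ t ∈ Set.Ici R,
      -(iteratedDerivWithin 2 g (Set.Ici R) t) ≤ -C0 * g t + C1 * Real.exp (-a * t)) :
    ∃ ε > 0, ∃ C > 0, ∀ t ∈ Set.Ici R, g t ≤ C * Real.exp (-ε * t) := by
  obtain ⟨C', -, T, -, hgT⟩ := hgrow
  have hderiv (n : ℕ) (hn : n < (2 : WithTop ℕ∞)) (t : ℝ) (ht : t ∈ Ioi R) :=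
    hasDerivAt_iteratedDerivWithin hg2 hn (uniqueDiffOn_Ici R) (Ici_mem_nhds ht)
  exact exp_decay_of_differential_inequality_general hC0 ha hg2.continuousOn
    (by simpa only [iteratedDerivWithin_zero] using hderiv 0 (by norm_num))
    (hderiv 1 (by norm_num))
    (fun _ => eventually_le_mul_exp_of_eventually_le_rpow (eventually_atTop.2 ⟨T, hgT⟩)
      (Real.sqrt_pos.2 hC0))
    fun t ht => hineq t (Ioi_subset_Ici_self ht)
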